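/- arXiv:1705.00968 — 2 statements merged into one kernel-verified Lean document; each statement's English description precedes it below -/
import Mathlib

section
/- Let r ≥ 1, N ≥ 1 be integers and K : Fin N → Fin r → ℕ an exponent matrix whose rows are pairwise distinct and each of whose rows has positive sum, and let ρ be the rank of K regarded as a real N×r matrix. If k is a positive integer with k·ρ < N, then the special integral θ_k of the multidimensional Tarry problem diverges, i.e. the function α ↦ |∫_{[0,1]^r} exp(2πi·Σ_{j} α_j ∏_i x_i^{K j i}) dx|^{2k} is not Lebesgue integrable on ℝ^N. -/
open MeasureTheory

/-- The integrand of the special integral of the multidimensional Tarry problem: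
`α ↦ |∫_{[0,1]^r} exp(2πi Σ_j α_j Π_i x_i^{K j i}) dx|^{2k}`. -/
noncomputable def tarryIntegrand (r N : ℕ) (K : Fin N → Fin r → ℕ) (k : ℕ)
    (α : Fin N → ℝ) : ℝ :=
  ‖∫ x in Set.Icc (0 : Fin r → ℝ) 1,
      Complex.exp (2 * Real.pi * Complex.I *
        ((∑ j : Fin N, α j * ∏ i : Fin r, x i ^ K j i : ℝ) : ℂ))‖ ^ (2 * k)

/-!
Up to scaling `α` by `2π`, the inner integral is the characteristic function of the law of the
monomial vector `(γ_j(x))_j` of a random point `x` of the cube, so its `k`-th power is the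
characteristic function of the law `ν` of the sum of `k` independent copies. By Plancherel, a finite
measure with square-integrable characteristic function is absolutely continuous: testing it against
a bump function between compact `T` and open `U ⊇ T` gives `ν T ≤ ‖ν̂‖₂ · (vol U)^{1/2}`.
But `γ_j(x) = exp ((K log x)_j)` depends only on the point `K log x` of the `ρ`-dimensional range of
`K`, so `ν` is carried by a smooth image of a `kρ`-dimensional space. If `kρ < N` this image is
Lebesgue-null, and `ν`, which is nonzero, cannot be absolutely continuous.
-/

open Module WithLp
open scoped ContDiff FourierTransform SchwartzMap Manifold

section CharFun

variable {V : Type*} [NormedAddCommGroup V] [InnerProductSpace ℝ V] [FiniteDimensional ℝ V]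
  [MeasurableSpace V] [BorelSpace V]

lemma integral_schwartzMap_eq_integral_charFun_mul_fourier (ν : Measure V) [IsFiniteMeasure ν]
    (φ : 𝓢(V, ℂ)) :
    ∫ x, φ x ∂ν = ∫ ξ, charFun ν ((2 * Real.pi) • ξ) * 𝓕 φ ξ := by
  have charFun_eq (ξ : V) : charFun ν ((2 * Real.pi) • ξ) =
      VectorFourier.fourierIntegral Real.fourierChar ν (-innerₗ V) 1 ξ := by
    simp [charFun_apply, VectorFourier.fourierIntegral, Real.fourierChar_apply,
      Circle.smul_def, inner_smul_right]
  have inversion (x : V) : φ x =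
      VectorFourier.fourierIntegral Real.fourierChar volume (-innerₗ V).flip
        (𝓕 φ : 𝓢(V, ℂ)) x := by
    nth_rw 1 [← FourierTransform.fourierInv_fourier_eq (F := 𝓢(V, ℂ)) φ]
    rw [SchwartzMap.fourierInv_coe, Real.fourierInv_eq]
    simp [VectorFourier.fourierIntegral, real_inner_comm]
  simp_rw [charFun_eq, inversion]
  simpa using (VectorFourier.integral_fourierIntegral_smul_eq_flip (μ := ν) (ν := volume)
    (f := 1) (g := (𝓕 φ : 𝓢(V, ℂ))) (L := -innerₗ V) Real.continuous_fourierChar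
    continuous_inner.neg (integrable_const 1) (𝓕 φ).integrable).symm

lemma eLpNorm_two_fourier {H : Type*} [NormedAddCommGroup H] [InnerProductSpace ℂ H]
    [CompleteSpace H] (φ : 𝓢(V, H)) :
    eLpNorm (𝓕 φ : 𝓢(V, H)) 2 volume = eLpNorm φ 2 volume := by
  have ne_top (ψ : 𝓢(V, H)) : eLpNorm ψ 2 volume ≠ ⊤ := (ψ.memLp 2 volume).eLpNorm_ne_top
  rw [← ENNReal.toReal_eq_toReal_iff' (ne_top _) (ne_top _), ← SchwartzMap.norm_toLp,
    ← SchwartzMap.norm_toLp, SchwartzMap.norm_fourier_toL2_eq]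

lemma enorm_integral_schwartzMap_le (ν : Measure V) [IsFiniteMeasure ν] (φ : 𝓢(V, ℂ)) :
    ‖∫ x, φ x ∂ν‖ₑ ≤
      eLpNorm (fun ξ ↦ charFun ν ((2 * Real.pi) • ξ)) 2 volume * eLpNorm φ 2 volume := by
  rw [integral_schwartzMap_eq_integral_charFun_mul_fourier, ← eLpNorm_two_fourier]
  refine le_trans ?_ (eLpNorm_smul_le_mul_eLpNorm (r := 1) (𝓕 φ).continuous.aestronglyMeasurable
    (measurable_charFun.comp (measurable_const_smul _)).aestronglyMeasurable)
  rw [eLpNorm_one_eq_lintegral_enorm]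
  exact enorm_integral_le_lintegral_enorm _

lemma exists_contDiff_hasCompactSupport_indicator_le {E : Type*} [NormedAddCommGroup E]
    [NormedSpace ℝ E] [FiniteDimensional ℝ E] {T U : Set E} (hT : IsCompact T) (hU : IsOpen U)
    (hTU : T ⊆ U) :
    ∃ f : E → ℝ, ContDiff ℝ ∞ f ∧ HasCompactSupport f ∧
      T.indicator 1 ≤ f ∧ f ≤ U.indicator 1 := by
  obtain ⟨L, hL, hTL, hLU⟩ := exists_compact_between hT hU hTU
  obtain ⟨f, hfT, hfL, hf01⟩ := exists_contMDiffMap_one_nhds_of_subset_interior (n := (⊤ : ℕ∞))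
    𝓘(ℝ, E) hT.isClosed hTL
  refine ⟨f, f.contMDiff.contDiff, .intro hL hfL, fun x ↦ ?_, fun x ↦ ?_⟩
  · exact Set.indicator_apply_le' (fun hx ↦ (hfT.self_of_nhdsSet x hx).ge) fun _ ↦ (hf01 x).1
  · exact Set.le_indicator_apply (fun _ ↦ (hf01 x).2) fun hx ↦ (hfL x (mt (@hLU x) hx)).le

lemma measure_le_eLpNorm_charFun_mul (ν : Measure V) [IsFiniteMeasure ν] {T U : Set V}
    (hT : IsCompact T) (hU : IsOpen U) (hTU : T ⊆ U) :
    ν T ≤ eLpNorm (fun ξ ↦ charFun ν ((2 * Real.pi) • ξ)) 2 volume *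
      volume U ^ (1 / 2 : ℝ) := by
  obtain ⟨f, hf, hfc, hTf, hfU⟩ := exists_contDiff_hasCompactSupport_indicator_le hT hU hTU
  have hf0 : 0 ≤ f := le_trans (Set.indicator_nonneg fun _ _ ↦ zero_le_one) hTf
  let φ : 𝓢(V, ℂ) := (hfc.comp_left (g := ((↑) : ℝ → ℂ)) Complex.ofReal_zero).toSchwartzMap
    (Complex.ofRealCLM.contDiff.comp hf)
  have hφ (x : V) : φ x = f x := rfl
  have ν_le : ν T ≤ ‖∫ x, φ x ∂ν‖ₑ := calc
    ν T = ∫⁻ x, T.indicator 1 x ∂ν := (lintegral_indicator_one hT.measurableSet).symm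
    _ ≤ ∫⁻ x, ENNReal.ofReal (f x) ∂ν := lintegral_mono fun x ↦ by
      by_cases hx : x ∈ T
      · simpa [hx] using hTf x
      · simp [hx]
    _ = ‖∫ x, φ x ∂ν‖ₑ := by
      simp_rw [hφ]
      rw [integral_complex_ofReal, ← ofReal_norm, Complex.norm_real,
        Real.norm_of_nonneg (integral_nonneg hf0),
        ofReal_integral_eq_lintegral_ofReal
          (hf.continuous.integrable_of_hasCompactSupport hfc) (.of_forall hf0)]
  have φ_le : eLpNorm φ 2 volume ≤ volume U ^ (1 / 2 : ℝ) := calc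
    eLpNorm φ 2 volume ≤ eLpNorm (U.indicator fun _ ↦ (1 : ℝ)) 2 volume :=
      eLpNorm_mono_real fun x ↦ by
        rw [hφ, Complex.norm_real, Real.norm_of_nonneg (hf0 x)]
        exact hfU x
    _ = volume U ^ (1 / 2 : ℝ) := by simp [eLpNorm_indicator_const hU.measurableSet]
  exact ν_le.trans ((enorm_integral_schwartzMap_le ν φ).trans (by gcongr))

theorem absolutelyContinuous_of_integrable_norm_charFun_sq (ν : Measure V) [IsFiniteMeasure ν]
    (hν : Integrable fun t ↦ ‖charFun ν t‖ ^ 2) : ν ≪ volume := by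
  have hν₂ : MemLp (fun ξ ↦ charFun ν ((2 * Real.pi) • ξ)) 2 volume :=
    (memLp_two_iff_integrable_sq_norm
      (measurable_charFun.comp (measurable_const_smul _)).aestronglyMeasurable).2
      (hν.comp_smul Real.two_pi_pos.ne')
  refine .mk fun s hs hs0 ↦ ?_
  rw [hs.measure_eq_iSup_isCompact ν]
  simp only [ENNReal.iSup_eq_zero]
  intro T hTs hT
  by_contra hνT
  set C := eLpNorm (fun ξ ↦ charFun ν ((2 * Real.pi) • ξ)) 2 volume
  obtain ⟨U, hTU, hU, hU_lt⟩ := Set.exists_isOpen_lt_of_lt T ((ν T / C) ^ 2) <| by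
    rw [measure_mono_null hTs hs0]
    exact ENNReal.pow_pos (ENNReal.div_pos hνT hν₂.eLpNorm_ne_top) 2
  have hU_lt' : volume U ^ (1 / 2 : ℝ) < ν T / C := by
    rwa [one_div, ENNReal.rpow_inv_lt_iff two_pos, ENNReal.rpow_two]
  exact (measure_le_eLpNorm_charFun_mul ν hT hU hTU).not_gt (ENNReal.mul_lt_of_lt_div' hU_lt')

lemma charFun_map_sum {X : Type*} [MeasurableSpace X] {μ : Measure X} [SigmaFinite μ]
    {f : X → V} (hf : Measurable f) (κ : Type*) [Fintype κ] (t : V) :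
    charFun ((Measure.pi fun _ : κ ↦ μ).map fun x ↦ ∑ m, f (x m)) t =
      charFun (μ.map f) t ^ Fintype.card κ := by
  have hexp : Continuous fun v : V ↦ Complex.exp (inner ℝ v t * Complex.I) := by fun_prop
  have hsum : Measurable fun x : κ → X ↦ ∑ m, f (x m) := by fun_prop
  rw [charFun_apply, charFun_apply, integral_map hsum.aemeasurable hexp.aestronglyMeasurable,
    integral_map hf.aemeasurable hexp.aestronglyMeasurable,
    ← integral_fintype_prod_eq_pow (ι := κ)]
  simp [sum_inner, Finset.sum_mul, Complex.exp_sum]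

theorem not_integrable_norm_charFun_map_pow {X : Type*} [MeasurableSpace X] {μ : Measure X}
    [IsFiniteMeasure μ] [NeZero μ] {f : X → V} (hf : Measurable f) {k : ℕ} {S : Set V}
    (hS : volume S = 0) (hfS : ∀ᵐ x ∂Measure.pi fun _ : Fin k ↦ μ, ∑ m, f (x m) ∈ S) :
    ¬ Integrable fun t ↦ ‖charFun (μ.map f) t‖ ^ (2 * k) := by
  intro hint
  have hsum : Measurable fun x : Fin k → X ↦ ∑ m, f (x m) := by fun_prop
  have hac : (Measure.pi fun _ : Fin k ↦ μ).map (fun x ↦ ∑ m, f (x m)) ≪ volume := by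
    refine absolutelyContinuous_of_integrable_norm_charFun_sq _ ?_
    simpa only [charFun_map_sum hf, Fintype.card_fin, norm_pow, ← pow_mul, mul_comm k] using hint
  have hnot : ∀ᵐ x ∂Measure.pi fun _ : Fin k ↦ μ, ∑ m, f (x m) ∉ S :=
    ae_of_ae_map hsum.aemeasurable (hac.ae_le (measure_eq_zero_iff_ae_notMem.1 hS))
  have : NeZero (Measure.pi fun _ : Fin k ↦ μ) :=
    ⟨by simp [← Measure.measure_univ_eq_zero, Measure.pi_univ, NeZero.ne]⟩
  obtain ⟨x, hx, hx'⟩ := (hfS.and hnot).exists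
  exact hx' hx

end CharFun

section MonomialMap

variable {ι σ : Type*} [Fintype σ]

/-- The vector of monomials in `x` with exponent matrix `A`; its law, for random `x`, has the inner
integral of the Tarry problem as characteristic function. The exponents are real, so it is meant for
positive `x`, and it takes values in a Euclidean space because `charFun` uses the inner product. -/
noncomputable def monomialMap (A : Matrix ι σ ℝ) (x : σ → ℝ) : EuclideanSpace ℝ ι :=
  toLp 2 fun j ↦ ∏ i, x i ^ A j i

lemma measurable_monomialMap (A : Matrix ι σ ℝ) : Measurable (monomialMap A) := by
  unfold monomialMap
  fun_prop

lemma prod_rpow_eq_exp_mulVec_log (A : Matrix ι σ ℝ) {x : σ → ℝ} (hx : ∀ i, 0 < x i) (j : ι) :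
    ∏ i, x i ^ A j i = Real.exp ((A.mulVec fun i ↦ Real.log (x i)) j) := by
  simp [Matrix.mulVec, dotProduct, Real.exp_sum, Real.rpow_def_of_pos (hx _), mul_comm]

lemma addHaar_range_eq_zero_of_finrank_lt {E F : Type*} [NormedAddCommGroup E] [NormedSpace ℝ E]
    [FiniteDimensional ℝ E] [NormedAddCommGroup F] [NormedSpace ℝ F] [FiniteDimensional ℝ F]
    [MeasurableSpace F] [BorelSpace F] (μ : Measure F) [μ.IsAddHaarMeasure] {f : E → F}
    (hf : ContDiff ℝ 1 f) (hEF : finrank ℝ E < finrank ℝ F) : μ (Set.range f) = 0 := by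
  refine Measure.absolutelyContinuous_isAddHaarMeasure μ (Measure.hausdorffMeasure (finrank ℝ F)) ?_
  have := hausdorffMeasure_of_dimH_lt (s := Set.range f) (d := finrank ℝ F)
    (hf.dimH_range_le.trans_lt (by exact_mod_cast hEF))
  simpa using this

variable [Fintype ι]

lemma volume_image_sum_monomialMap_eq_zero (A : Matrix ι σ ℝ) {κ : Type*} [Fintype κ]
    (h : Fintype.card κ * A.rank < Fintype.card ι) :
    volume ((fun x : κ → σ → ℝ ↦ ∑ m, monomialMap A (x m)) '' {x | ∀ m i, 0 < x m i}) = 0 := by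
  let F (y : κ → LinearMap.range A.mulVecLin) : EuclideanSpace ℝ ι :=
    ∑ m, toLp 2 fun j ↦ Real.exp ((y m : ι → ℝ) j)
  have hcoord (m : κ) (j : ι) :
      ContDiff ℝ 1 fun y : κ → LinearMap.range A.mulVecLin ↦ (y m : ι → ℝ) j :=
    contDiff_pi.1 ((LinearMap.range A.mulVecLin).subtypeL.contDiff.comp
      (contDiff_apply ℝ (LinearMap.range A.mulVecLin) m)) j
  have hF : ContDiff ℝ 1 F := ContDiff.sum fun m _ ↦
    PiLp.contDiff_toLp.comp <| contDiff_pi.2 fun j ↦ (hcoord m j).exp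
  have hdim : finrank ℝ (κ → LinearMap.range A.mulVecLin) < finrank ℝ (EuclideanSpace ℝ ι) := by
    simpa [finrank_pi_fintype, Matrix.rank] using h
  refine measure_mono_null ?_ (addHaar_range_eq_zero_of_finrank_lt volume hF hdim)
  rintro _ ⟨x, hx, rfl⟩
  refine ⟨fun m ↦ ⟨A.mulVec fun i ↦ Real.log (x m i), ⟨_, rfl⟩⟩, ?_⟩
  simp only [F, monomialMap, prod_rpow_eq_exp_mulVec_log A (hx _)]

lemma integral_exp_eq_charFun_map_monomialMap (A : Matrix ι σ ℝ)
    (μ : Measure (σ → ℝ)) (α : ι → ℝ) :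
    ∫ x, Complex.exp (2 * Real.pi * Complex.I * ((∑ j, α j * ∏ i, x i ^ A j i : ℝ) : ℂ)) ∂μ =
      charFun (μ.map (monomialMap A)) ((2 * Real.pi) • toLp 2 α) := by
  rw [charFun_apply, integral_map (measurable_monomialMap A).aemeasurable
    (Continuous.aestronglyMeasurable (by fun_prop))]
  congr with x
  have inner_eq : inner ℝ (monomialMap A x) (toLp 2 α) = ∑ j, α j * ∏ i, x i ^ A j i := by
    simp [monomialMap, PiLp.inner_apply]
  rw [inner_smul_right, inner_eq]
  push_cast
  ring_nf

theorem tarry_diverges_of_k_rank_lt_general (A : Matrix ι σ ℝ) (μ : Measure (σ → ℝ))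
    [IsFiniteMeasure μ] [NeZero μ] (hμ : ∀ᵐ x ∂μ, ∀ i, 0 < x i) (k : ℕ)
    (hk : k * A.rank < Fintype.card ι) :
    ¬ Integrable fun α : ι → ℝ ↦ ‖∫ x, Complex.exp (2 * Real.pi * Complex.I *
      ((∑ j, α j * ∏ i, x i ^ A j i : ℝ) : ℂ)) ∂μ‖ ^ (2 * k) := by
  have hpos : ∀ᵐ x ∂Measure.pi fun _ : Fin k ↦ μ, ∀ m i, 0 < x m i :=
    ae_all_iff.2 fun m ↦ (Measure.quasiMeasurePreserving_eval (fun _ : Fin k ↦ μ) m).ae hμ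
  simp_rw [integral_exp_eq_charFun_map_monomialMap]
  intro hint
  have hint' := (PiLp.volume_preserving_ofLp ι).integrable_comp_of_integrable hint
  refine not_integrable_norm_charFun_map_pow (measurable_monomialMap A)
    (volume_image_sum_monomialMap_eq_zero A (κ := Fin k) (by simpa using hk))
    (hpos.mono fun x hx ↦ ⟨x, hx, rfl⟩) ?_
  exact (integrable_comp_smul_iff volume
    (fun t ↦ ‖charFun (μ.map (monomialMap A)) t‖ ^ (2 * k)) Real.two_pi_pos.ne').1 hint'

end MonomialMap

lemma ae_restrict_Icc_zero_one_pos {σ : Type*} [Fintype σ] :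
    ∀ᵐ x ∂volume.restrict (Set.Icc (0 : σ → ℝ) 1), ∀ i, 0 < x i := by
  have hne : ∀ᵐ x : σ → ℝ, ∀ i, x i ≠ 0 :=
    ae_all_iff.2 fun i ↦ Measure.ae_eval_ne (fun _ ↦ (volume : Measure ℝ)) i 0
  filter_upwards [ae_restrict_of_ae hne, ae_restrict_mem measurableSet_Icc] with x hx hx01 i
  exact (hx01.1 i).lt_of_ne (hx i).symm

instance isProbabilityMeasure_restrict_Icc_zero_one {σ : Type*} [Fintype σ] :
    IsProbabilityMeasure (volume.restrict (Set.Icc (0 : σ → ℝ) 1)) :=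
  ⟨by simp [Real.volume_Icc_pi]⟩

theorem tarry_diverges_of_k_rank_lt
    (r N : ℕ) (hr : 1 ≤ r) (hN : 1 ≤ N)
    (K : Fin N → Fin r → ℕ)
    (hdist : Function.Injective K)
    (hpos : ∀ j : Fin N, 0 < ∑ i : Fin r, K j i)
    (ρ : ℕ) (hρ : ρ = Matrix.rank (Matrix.of fun (j : Fin N) (i : Fin r) => (K j i : ℝ)))
    (k : ℕ) (hk : 0 < k) (hkρ : k * ρ < N) :
    ¬ Integrable (tarryIntegrand r N K k) (volume : Measure (Fin N → ℝ)) := by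
  subst hρ
  unfold tarryIntegrand
  simpa only [Matrix.of_apply, Real.rpow_natCast] using
    tarry_diverges_of_k_rank_lt_general (Matrix.of fun j i ↦ (K j i : ℝ))
      (volume.restrict (Set.Icc 0 1)) ae_restrict_Icc_zero_one_pos k (by simpa using hkρ)
end

section
/- Let r ≥ 1 and m ≥ 1 be integers and consider the polynomial F_α(x) = Σ_{j=1}^m α_j (x_1·x_2⋯x_r)^j for α ∈ ℝ^m. If k is a positive integer with 2k > m(m+1)/2 + 1, then the special integral θ_k converges, i.e. the function α ↦ |∫_{[0,1]^r} exp(2πi F_α(x)) dx|^{2k} is Lebesgue integrable on ℝ^m. -/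
open MeasureTheory

/-!
Split `[0, 1]` at the points where `F'` changes monotonicity or `|F'|` crosses the level `N`. By
van der Corput's estimate the pieces with `|F'| ≥ N` contribute `O(1 / N)`, so if the one-variable
integral exceeds a constant times `1 / N` then `|F'| ≤ N` on one of the `N` cells of length `1 / N`.
Evaluating `F'` at `m` equidistant points of a cell of length `h` is a linear map of `α` whose
determinant is a constant times `h ^ (0 + 1 + ⋯ + (m - 1))` (Vandermonde), so such `α` have measure
`O(N ^ (D + 1))`, where `D = 1 + 2 + ⋯ + m`. Thus the one-variable integral is bounded and of weak
type `D + 1`, hence in `L^p` for `p > D + 1`.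

Integrating over one further variable `t ∈ [0, 1]` averages over the dilations `α j ↦ α j * t ^ j`,
`j = 1, …, m`. These multiply `L^p` norms by `t ^ (-D / p)`, which is integrable on `[0, 1]` for
`p > D`, so by Minkowski's integral inequality the average stays in `L^p`.
-/

open Set Polynomial
open scoped ENNReal FourierTransform

/-- `f` does not change sign on `s`; zeros are allowed. For `f` the second derivative of a phase,
this is the monotonicity hypothesis of van der Corput's estimate. -/
def HasConstantSignOn (f : ℝ → ℝ) (s : Set ℝ) : Prop :=
  (∀ x ∈ s, 0 ≤ f x) ∨ ∀ x ∈ s, f x ≤ 0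

theorem hasConstantSignOn_Icc_of_ne_zero {f : ℝ → ℝ} {a b : ℝ} (hab : a ≤ b)
    (hf : ContinuousOn f (Icc a b)) (hne : ∀ x ∈ Ioo a b, f x ≠ 0) :
    HasConstantSignOn f (Icc a b) := by
  rcases hab.eq_or_lt with rfl | hlt
  · simpa [HasConstantSignOn] using le_total 0 (f a)
  have hIoo : HasConstantSignOn f (Ioo a b) := by
    by_contra hcon
    simp only [HasConstantSignOn] at hcon
    push Not at hcon
    obtain ⟨⟨x, hx, hfx⟩, y, hy, hfy⟩ := hcon
    obtain ⟨z, hz, hfz⟩ := isPreconnected_Ioo.intermediate_value hx hy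
      (hf.mono Ioo_subset_Icc_self) ⟨hfx.le, hfy.le⟩
    exact hne z hz hfz
  have hclosure := closure_Ioo hlt.ne
  refine hIoo.imp (fun h x hx => ?_) fun h x hx => ?_
  · exact ContinuousWithinAt.closure_le (s := Ioo a b) (f := fun _ => 0) (by rwa [hclosure])
      continuousWithinAt_const ((hf x hx).mono Ioo_subset_Icc_self) h
  · exact ContinuousWithinAt.closure_le (s := Ioo a b) (g := fun _ => 0) (by rwa [hclosure])
      ((hf x hx).mono Ioo_subset_Icc_self) continuousWithinAt_const h

theorem HasConstantSignOn.integral_abs_eq_abs_integral {f : ℝ → ℝ} {a b : ℝ} (hab : a ≤ b)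
    (hf : HasConstantSignOn f (Icc a b)) : ∫ x in a..b, |f x| = |∫ x in a..b, f x| := by
  rcases hf with hf | hf
  · rw [abs_of_nonneg (intervalIntegral.integral_nonneg hab hf)]
    refine intervalIntegral.integral_congr fun x hx => abs_of_nonneg (hf x ?_)
    rwa [uIcc_of_le hab] at hx
  · have hneg : ∫ x in a..b, |f x| = ∫ x in a..b, -f x := by
      refine intervalIntegral.integral_congr fun x hx => abs_of_nonpos (hf x ?_)
      rwa [uIcc_of_le hab] at hx
    rw [hneg, intervalIntegral.integral_neg, abs_of_nonpos]
    rw [← neg_nonneg, ← intervalIntegral.integral_neg]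
    exact intervalIntegral.integral_nonneg hab fun x hx => neg_nonneg.2 (hf x hx)

theorem norm_integral_smul_deriv_le_of_hasConstantSignOn {E : Type*} [NormedAddCommGroup E]
    [NormedSpace ℝ E] [CompleteSpace E] {u u' : ℝ → ℝ} {v v' : ℝ → E} {a b A B : ℝ} (hab : a ≤ b)
    (hu : ∀ x ∈ Icc a b, HasDerivAt u (u' x) x) (hv : ∀ x ∈ Icc a b, HasDerivAt v (v' x) x)
    (hu' : IntervalIntegrable u' volume a b) (hv' : IntervalIntegrable v' volume a b)
    (hsign : HasConstantSignOn u' (Icc a b))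
    (hA : ∀ x ∈ Icc a b, |u x| ≤ A) (hB : ∀ x ∈ Icc a b, ‖v x‖ ≤ B) :
    ‖∫ x in a..b, u x • v' x‖ ≤ 4 * (A * B) := by
  have ha : a ∈ Icc a b := left_mem_Icc.2 hab
  have hb : b ∈ Icc a b := right_mem_Icc.2 hab
  have hB0 : 0 ≤ B := (norm_nonneg _).trans (hB a ha)
  have hbound : ∀ x ∈ Icc a b, ‖u x • v x‖ ≤ A * B := fun x hx => by
    rw [norm_smul, Real.norm_eq_abs]
    exact mul_le_mul (hA x hx) (hB x hx) (norm_nonneg _) ((abs_nonneg _).trans (hA x hx))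
  have hvariation : ∫ x in a..b, |u' x| ≤ 2 * A := by
    rw [hsign.integral_abs_eq_abs_integral hab,
      intervalIntegral.integral_eq_sub_of_hasDerivAt (by rwa [uIcc_of_le hab]) hu']
    linarith [abs_sub (u b) (u a), hA a ha, hA b hb]
  have hremainder : ‖∫ x in a..b, u' x • v x‖ ≤ 2 * A * B :=
    calc ‖∫ x in a..b, u' x • v x‖ ≤ ∫ x in a..b, |u' x| * B := by
          refine intervalIntegral.norm_integral_le_of_norm_le hab (.of_forall fun x hx => ?_)
            (hu'.abs.mul_const B)
          rw [norm_smul, Real.norm_eq_abs]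
          exact mul_le_mul_of_nonneg_left (hB x (Ioc_subset_Icc_self hx)) (abs_nonneg _)
      _ ≤ 2 * A * B := by
          rw [intervalIntegral.integral_mul_const]
          exact mul_le_mul_of_nonneg_right hvariation hB0
  rw [← uIcc_of_le hab] at hu hv
  rw [intervalIntegral.integral_smul_deriv_eq_deriv_smul hu hv hu' hv']
  linarith [norm_sub_le (u b • v b - u a • v a) (∫ x in a..b, u' x • v x),
    norm_sub_le (u b • v b) (u a • v a), hbound a ha, hbound b hb]

theorem hasDerivAt_inv_mul_fourierChar_comp {φ : ℝ → ℝ} {φ' x : ℝ} (hφ : HasDerivAt φ φ' x) :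
    HasDerivAt (fun x => (2 * Real.pi * Complex.I)⁻¹ * (𝐞 (φ x) : ℂ)) (φ' • (𝐞 (φ x) : ℂ)) x := by
  refine (((Real.hasDerivAt_fourierChar (φ x)).scomp x hφ).const_mul
    (2 * Real.pi * Complex.I)⁻¹).congr_deriv ?_
  rw [mul_smul_comm, inv_mul_cancel_left₀ Complex.two_pi_I_ne_zero]

theorem norm_integral_fourierChar_le_of_le_abs_deriv {φ φ' φ'' : ℝ → ℝ} {a b l : ℝ} (hab : a ≤ b)
    (hl : 0 < l) (hφ : ∀ x ∈ Icc a b, HasDerivAt φ (φ' x) x)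
    (hφ' : ∀ x ∈ Icc a b, HasDerivAt φ' (φ'' x) x) (hφ'' : ContinuousOn φ'' (Icc a b))
    (hsign : HasConstantSignOn φ'' (Icc a b)) (hle : ∀ x ∈ Icc a b, l ≤ |φ' x|) :
    ‖∫ x in a..b, (𝐞 (φ x) : ℂ)‖ ≤ 1 / l := by
  have hne : ∀ x ∈ Icc a b, φ' x ≠ 0 := fun x hx => abs_pos.1 (hl.trans_le (hle x hx))
  have hφ_cont : ContinuousOn φ (Icc a b) := HasDerivAt.continuousOn hφ
  have hφ'_cont : ContinuousOn φ' (Icc a b) := HasDerivAt.continuousOn hφ'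
  have hinv_cont : ContinuousOn (fun x => -φ'' x / φ' x ^ 2) (Icc a b) :=
    hφ''.neg.div (hφ'_cont.pow 2) fun x hx => pow_ne_zero _ (hne x hx)
  have hexp_cont : ContinuousOn (fun x => φ' x • (𝐞 (φ x) : ℂ)) (Icc a b) := by fun_prop
  have hinv_sign : HasConstantSignOn (fun x => -φ'' x / φ' x ^ 2) (Icc a b) :=
    hsign.symm.imp
      (fun h x hx => div_nonneg (neg_nonneg.2 (h x hx)) (sq_nonneg _))
      (fun h x hx => div_nonpos_of_nonpos_of_nonneg (neg_nonpos.2 (h x hx)) (sq_nonneg _))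
  have hintegrand : ∫ x in a..b, (𝐞 (φ x) : ℂ) =
      ∫ x in a..b, (φ' x)⁻¹ • φ' x • (𝐞 (φ x) : ℂ) := by
    refine intervalIntegral.integral_congr fun x hx => (inv_smul_smul₀ (hne x ?_) _).symm
    rwa [uIcc_of_le hab] at hx
  have hparts : ‖∫ x in a..b, (φ' x)⁻¹ • φ' x • (𝐞 (φ x) : ℂ)‖ ≤
      4 * (1 / l * (2 * Real.pi)⁻¹) := by
    refine norm_integral_smul_deriv_le_of_hasConstantSignOn hab
      (fun x hx => (hφ' x hx).fun_inv (hne x hx))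
      (fun x hx => hasDerivAt_inv_mul_fourierChar_comp (hφ x hx))
      (hinv_cont.intervalIntegrable_of_Icc hab) (hexp_cont.intervalIntegrable_of_Icc hab)
      hinv_sign (fun x hx => ?_) fun x _ => ?_
    · rw [abs_inv, ← one_div]
      exact one_div_le_one_div_of_le hl (hle x hx)
    · simp [abs_of_pos Real.pi_pos, Circle.norm_coe]
  have hpi : 4 * (2 * Real.pi)⁻¹ ≤ 1 := by
    rw [mul_inv_le_iff₀ (by positivity)]
    linarith [Real.pi_gt_three]
  calc ‖∫ x in a..b, (𝐞 (φ x) : ℂ)‖ ≤ 4 * (1 / l * (2 * Real.pi)⁻¹) := hintegrand ▸ hparts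
    _ = 4 * (2 * Real.pi)⁻¹ * (1 / l) := by ring
    _ ≤ 1 / l := mul_le_of_le_one_left (by positivity) hpi

theorem norm_integral_le_card_add_one_mul {E : Type*} [NormedAddCommGroup E] [NormedSpace ℝ E]
    {g : ℝ → E} {B : ℝ} (S : Finset ℝ) {a b : ℝ} (hab : a ≤ b)
    (hg : IntervalIntegrable g volume a b)
    (hB : ∀ c d, a ≤ c → c ≤ d → d ≤ b → Disjoint (Ioo c d) S → ‖∫ x in c..d, g x‖ ≤ B) :
    ‖∫ x in a..b, g x‖ ≤ (S.card + 1) * B := by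
  induction S using Finset.induction_on_max generalizing b with
  | empty => simpa using hB a b le_rfl hab le_rfl (by simp)
  | insert s S hS ih =>
    have hB0 : 0 ≤ B := by simpa using hB a a le_rfl le_rfl hab (by simp)
    have hcard : ((insert s S).card : ℝ) + 1 = (S.card + 1) + 1 := by
      rw [Finset.card_insert_of_notMem fun hs => (hS s hs).false]
      push_cast
      ring
    have hleft : ∀ e ∈ Icc a b, e ≤ s → ‖∫ x in a..e, g x‖ ≤ (S.card + 1) * B :=
      fun e he hes => ih he.1 (hg.mono_set (by
        rw [uIcc_of_le he.1, uIcc_of_le hab]; exact Icc_subset_Icc_right he.2))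
        fun c d hc hcd hd hdisj => hB c d hc hcd (hd.trans he.2) <| by
          rw [Finset.coe_insert, disjoint_insert_right]
          exact ⟨fun hs => (hs.2.trans_le (hd.trans hes)).false, hdisj⟩
    have hright : ∀ e ∈ Icc a b, s ≤ e → ‖∫ x in e..b, g x‖ ≤ B := fun e he hse =>
      hB e b he.1 he.2 le_rfl <| disjoint_left.2 fun x hx hxS => by
        rcases Finset.mem_insert.1 hxS with rfl | hxS
        · exact (hx.1.trans_le hse).false
        · exact ((hS x hxS).trans_le (hse.trans hx.1.le)).false
    rw [hcard, add_mul, one_mul]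
    have hS0 : 0 ≤ (S.card + 1) * B := by positivity
    rcases le_total s a with hsa | has
    · exact (hright a ⟨le_rfl, hab⟩ hsa).trans (le_add_of_nonneg_left hS0)
    rcases le_total b s with hbs | hsb
    · exact (hleft b ⟨hab, le_rfl⟩ hbs).trans (le_add_of_nonneg_right hB0)
    have hs : s ∈ uIcc a b := by rw [uIcc_of_le hab]; exact ⟨has, hsb⟩
    rw [← intervalIntegral.integral_add_adjacent_intervals
      (hg.mono_set (uIcc_subset_uIcc_left hs)) (hg.mono_set (uIcc_subset_uIcc_right hs))]
    exact (norm_add_le _ _).trans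
      (add_le_add (hleft s ⟨has, hsb⟩ le_rfl) (hright s ⟨has, hsb⟩ le_rfl))

theorem hasConstantSignOn_eval_of_disjoint_roots {q : ℝ[X]} {a b : ℝ} (hab : a ≤ b)
    (hdisj : Disjoint (Ioo a b) q.roots.toFinset) :
    HasConstantSignOn (fun x => q.eval x) (Icc a b) := by
  rcases eq_or_ne q 0 with rfl | hq
  · simp [HasConstantSignOn]
  refine hasConstantSignOn_Icc_of_ne_zero hab q.continuousOn fun x hx hroot => ?_
  exact disjoint_left.1 hdisj hx (by simpa [hq] using hroot)

/-- The roots of `q - l`, `q + l` and `q'`: between two consecutive ones, `q` is monotone and `|q|`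
stays on one side of the level `l`. -/
noncomputable def breakpoints (q : ℝ[X]) (l : ℝ) : Finset ℝ :=
  (q - C l).roots.toFinset ∪ (q + C l).roots.toFinset ∪ (derivative q).roots.toFinset

theorem card_breakpoints_le (q : ℝ[X]) (l : ℝ) : (breakpoints q l).card ≤ 3 * q.natDegree := by
  have hroots (p : ℝ[X]) (hp : p.natDegree ≤ q.natDegree) :
      p.roots.toFinset.card ≤ q.natDegree :=
    (Multiset.toFinset_card_le _).trans ((card_roots' p).trans hp)
  calc (breakpoints q l).card
      ≤ (q - C l).roots.toFinset.card + (q + C l).roots.toFinset.card +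
          (derivative q).roots.toFinset.card :=
        (Finset.card_union_le _ _).trans (by gcongr; exact Finset.card_union_le _ _)
    _ ≤ q.natDegree + q.natDegree + q.natDegree := by
        gcongr
        · exact hroots _ natDegree_sub_C.le
        · exact hroots _ natDegree_add_C.le
        · exact hroots _ ((natDegree_derivative_le q).trans (Nat.sub_le _ _))
    _ = 3 * q.natDegree := by ring

theorem le_abs_eval_or_abs_eval_le_of_disjoint_breakpoints {q : ℝ[X]} {l a b : ℝ} (hab : a ≤ b)
    (hdisj : Disjoint (Ioo a b) (breakpoints q l)) :
    (∀ x ∈ Icc a b, l ≤ |q.eval x|) ∨ ∀ x ∈ Icc a b, |q.eval x| ≤ l := by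
  simp only [breakpoints, Finset.coe_union, disjoint_union_right] at hdisj
  have hsub := hasConstantSignOn_eval_of_disjoint_roots hab hdisj.1.1
  have hadd := hasConstantSignOn_eval_of_disjoint_roots hab hdisj.1.2
  simp only [HasConstantSignOn, eval_sub, eval_add, eval_C] at hsub hadd
  rcases hsub with hsub | hsub
  · exact .inl fun x hx => (sub_nonneg.1 (hsub x hx)).trans (le_abs_self _)
  rcases hadd with hadd | hadd
  · exact .inr fun x hx => abs_le.2
      ⟨neg_le_iff_add_nonneg.2 (hadd x hx), sub_nonpos.1 (hsub x hx)⟩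
  · exact .inl fun x hx => le_abs.2 (.inr (by linarith [hadd x hx]))

theorem norm_integral_fourierChar_eval_le {p : ℝ[X]} {l B a b : ℝ} (hl : 0 < l) (hlB : 1 / l ≤ B)
    (hab : a ≤ b)
    (hB : ∀ c d, a ≤ c → c ≤ d → d ≤ b → (∀ x ∈ Icc c d, |(derivative p).eval x| ≤ l) →
      d - c ≤ B) :
    ‖∫ x in a..b, (𝐞 (p.eval x) : ℂ)‖ ≤ (3 * p.natDegree + 1) * B := by
  have hB0 : 0 ≤ B := (one_div_pos.2 hl).le.trans hlB
  have hcard : ((breakpoints (derivative p) l).card : ℝ) ≤ 3 * p.natDegree := by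
    exact_mod_cast (card_breakpoints_le _ l).trans
      (Nat.mul_le_mul_left 3 ((natDegree_derivative_le p).trans (Nat.sub_le _ _)))
  have hcont : Continuous fun x => (𝐞 (p.eval x) : ℂ) := by fun_prop
  refine (norm_integral_le_card_add_one_mul (breakpoints (derivative p) l) hab
    (hcont.intervalIntegrable a b) fun c d hac hcd hdb hdisj => ?_).trans (by gcongr)
  rcases le_abs_eval_or_abs_eval_le_of_disjoint_breakpoints hcd hdisj with hlarge | hsmall
  · have hdisj' : Disjoint (Ioo c d) (derivative (derivative p)).roots.toFinset :=
      hdisj.mono_right (Finset.coe_subset.2 Finset.subset_union_right)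
    exact (norm_integral_fourierChar_le_of_le_abs_deriv hcd hl (fun x _ => p.hasDerivAt x)
      (fun x _ => (derivative p).hasDerivAt x) (derivative (derivative p)).continuousOn
      (hasConstantSignOn_eval_of_disjoint_roots hcd hdisj') hlarge).trans hlB
  · calc ‖∫ x in c..d, (𝐞 (p.eval x) : ℂ)‖ ≤ 1 * |d - c| :=
          intervalIntegral.norm_integral_le_of_norm_le_const fun x _ => (Circle.norm_coe _).le
      _ = d - c := by rw [one_mul, abs_of_nonneg (sub_nonneg.2 hcd)]
      _ ≤ B := hB c d hac hcd hdb hsmall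

theorem exists_Icc_div_subset_Icc {N : ℕ} (hN : 0 < N) {c d : ℝ} (hc : 0 ≤ c) (hd : d ≤ 1)
    (hcd : 2 / N < d - c) :
    ∃ i < N, Icc (i / N : ℝ) (i / N + 1 / N) ⊆ Icc c d := by
  have hN' : (0 : ℝ) < N := by exact_mod_cast hN
  have hlower := Nat.le_ceil (c * N)
  have hupper := Nat.ceil_lt_add_one (show 0 ≤ c * N by positivity)
  have hlength : c * N + 2 < d * N := by
    rw [div_lt_iff₀ hN'] at hcd
    linarith
  have hdN : d * N ≤ N := mul_le_of_le_one_left hN'.le hd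
  refine ⟨⌈c * N⌉₊, by exact_mod_cast (by linarith : (⌈c * N⌉₊ : ℝ) < N), Icc_subset_Icc ?_ ?_⟩
  · rwa [le_div_iff₀ hN']
  · rw [← add_div, div_le_iff₀ hN']
    linarith

theorem volume_abs_mulVec_le {ι : Type*} [Fintype ι] [DecidableEq ι] {M : Matrix ι ι ℝ}
    (hM : M.det ≠ 0) {L : ℝ} (hL : 0 ≤ L) :
    volume {α : ι → ℝ | ∀ i, |M.mulVec α i| ≤ L} =
      ENNReal.ofReal (|M.det|⁻¹ * (2 * L) ^ Fintype.card ι) := by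
  have hpreimage : {α : ι → ℝ | ∀ i, |M.mulVec α i| ≤ L} =
      Matrix.toLin' M ⁻¹' Icc (fun _ => -L) fun _ => L := by
    ext α
    simp [abs_le, Pi.le_def, forall_and]
  rw [hpreimage, Measure.addHaar_preimage_linearMap _ (by rwa [LinearMap.det_toLin']),
    LinearMap.det_toLin', Real.volume_Icc_pi, Finset.prod_const, Finset.card_univ, abs_inv,
    sub_neg_eq_add, ← two_mul, ← ENNReal.ofReal_pow (by positivity),
    ← ENNReal.ofReal_mul (by positivity)]

theorem det_vandermonde_const_add_const_mul {R : Type*} [CommRing R] {n : ℕ} (a h : R)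
    (y : Fin n → R) :
    (Matrix.vandermonde fun i => a + h * y i).det =
      h ^ (∑ i : Fin n, (i : ℕ)) * (Matrix.vandermonde y).det := by
  have hscale : Matrix.vandermonde (fun i => h * y i) =
      Matrix.vandermonde y * Matrix.diagonal fun j : Fin n => h ^ (j : ℕ) := by
    ext i j
    rw [Matrix.mul_diagonal, Matrix.vandermonde_apply, Matrix.vandermonde_apply, mul_pow, mul_comm]
  simp_rw [add_comm a]
  rw [Matrix.det_vandermonde_add, hscale, Matrix.det_mul, Matrix.det_diagonal,
    Finset.prod_pow_eq_pow_sum, mul_comm]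

section Phase

variable {ι : Type*} [Fintype ι] (d : ι → ℕ)

/-- The polynomial `∑ j, α j * X ^ d j`; at `x 1 ⋯ x r` it is the phase of the oscillatory
integral. -/
noncomputable def phase (α : ι → ℝ) : ℝ[X] :=
  ∑ j, C (α j) * X ^ d j

theorem eval_phase (α : ι → ℝ) (x : ℝ) : (phase d α).eval x = ∑ j, α j * x ^ d j := by
  simp [phase, eval_finsetSum]

end Phase

/-- The exponents `1, …, m` of the Tarry problem, indexed from `0`. -/
abbrev tarryExponent (m : ℕ) (j : Fin m) : ℕ :=
  j + 1

theorem natDegree_phase_tarryExponent_le {m : ℕ} (α : Fin m → ℝ) :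
    (phase (tarryExponent m) α).natDegree ≤ m :=
  natDegree_sum_le_of_forall_le _ _ fun j _ => (natDegree_C_mul_X_pow_le _ _).trans j.2

/-- The matrix of the linear map sending coefficients `α` to the values at the nodes `x` of the
derivative of `∑ j, α j * X ^ (j + 1)`; its determinant controls the measure of the set of `α` for
which these values are small. -/
def derivativeMatrix {m : ℕ} (x : Fin m → ℝ) : Matrix (Fin m) (Fin m) ℝ :=
  Matrix.vandermonde x * Matrix.diagonal fun j : Fin m => ((j : ℕ) : ℝ) + 1

theorem derivativeMatrix_mulVec {m : ℕ} (x α : Fin m → ℝ) (s : Fin m) :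
    (derivativeMatrix x).mulVec α s =
      (derivative (phase (tarryExponent m) α)).eval (x s) := by
  simp only [derivativeMatrix, phase, Matrix.mulVec, dotProduct, Matrix.mul_diagonal,
    Matrix.vandermonde_apply, derivative_sum, eval_finsetSum]
  refine Finset.sum_congr rfl fun j _ => ?_
  simp
  ring

theorem det_derivativeMatrix_const_add_const_mul {m : ℕ} (a h : ℝ) (y : Fin m → ℝ) :
    (derivativeMatrix fun s => a + h * y s).det =
      h ^ (∑ j : Fin m, (j : ℕ)) * (derivativeMatrix y).det := by
  simp only [derivativeMatrix, Matrix.det_mul, det_vandermonde_const_add_const_mul, mul_assoc]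

theorem det_derivativeMatrix_ne_zero {m : ℕ} {y : Fin m → ℝ} (hy : Function.Injective y) :
    (derivativeMatrix y).det ≠ 0 := by
  rw [derivativeMatrix, Matrix.det_mul, Matrix.det_diagonal]
  exact mul_ne_zero (Matrix.det_vandermonde_ne_zero_iff.2 hy)
    (Finset.prod_ne_zero_iff.2 fun j _ => by positivity)

theorem exists_volume_abs_derivative_phase_le (m : ℕ) :
    ∃ K : ℝ, 0 ≤ K ∧ ∀ a h L : ℝ, 0 < h → 0 ≤ L →
      volume {α : Fin m → ℝ | ∀ x ∈ Icc a (a + h),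
        |(derivative (phase (tarryExponent m) α)).eval x| ≤ L} ≤
      ENNReal.ofReal (K * (L ^ m / h ^ ∑ j : Fin m, (j : ℕ))) := by
  set y : Fin m → ℝ := fun s => (s : ℝ) / m
  have hm (s : Fin m) : (0 : ℝ) < m := by exact_mod_cast s.pos
  have hy_inj : Function.Injective y := fun s t hst =>
    Fin.ext (by exact_mod_cast (div_left_inj' (hm s).ne').1 hst)
  have hdet := det_derivativeMatrix_ne_zero hy_inj
  refine ⟨|(derivativeMatrix y).det|⁻¹ * 2 ^ m, by positivity, fun a h L hh hL => ?_⟩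
  have hnode (s : Fin m) : a + h * y s ∈ Icc a (a + h) := by
    have hy1 : y s ≤ 1 := (div_le_one (hm s)).2 (by exact_mod_cast s.2.le)
    exact ⟨le_add_of_nonneg_right (by positivity),
      (add_le_add_iff_left a).2 (mul_le_of_le_one_right hh.le hy1)⟩
  have hdet_affine := det_derivativeMatrix_const_add_const_mul a h y
  calc volume {α : Fin m → ℝ | ∀ x ∈ Icc a (a + h),
        |(derivative (phase (tarryExponent m) α)).eval x| ≤ L}
      ≤ volume {α | ∀ s, |(derivativeMatrix fun s => a + h * y s).mulVec α s| ≤ L} :=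
        measure_mono fun α hα s => by
          rw [derivativeMatrix_mulVec]
          exact hα _ (hnode s)
    _ = ENNReal.ofReal (|(derivativeMatrix y).det|⁻¹ * 2 ^ m *
          (L ^ m / h ^ ∑ j : Fin m, (j : ℕ))) := by
        rw [volume_abs_mulVec_le (by rw [hdet_affine]; positivity) hL, hdet_affine, abs_mul,
          abs_of_pos (pow_pos hh _), Fintype.card_fin, mul_pow]
        congr 1
        field_simp

theorem memLp_of_meas_lt_norm_le {X E : Type*} [MeasurableSpace X] {μ : Measure X}
    [NormedAddCommGroup E] {f : X → E} (hf : AEStronglyMeasurable f μ) {M K s p : ℝ} (hp : 0 < p)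
    (hsp : s < p) (hM : ∀ x, ‖f x‖ ≤ M)
    (hK : ∀ t ∈ Ioo 0 M, μ {x | t < ‖f x‖} ≤ ENNReal.ofReal (K * t ^ (-s))) :
    MemLp f (ENNReal.ofReal p) μ := by
  refine ⟨hf, (eLpNorm_lt_top_iff_lintegral_rpow_enorm_lt_top (by simpa using hp)
    ENNReal.ofReal_ne_top).2 ?_⟩
  have henorm : ∀ x, ‖f x‖ₑ ^ (ENNReal.ofReal p).toReal = ENNReal.ofReal (‖f x‖ ^ p) := fun x => by
    rw [ENNReal.toReal_ofReal hp.le, ← ofReal_norm,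
      ENNReal.ofReal_rpow_of_nonneg (norm_nonneg _) hp.le]
  simp_rw [henorm]
  rw [lintegral_rpow_eq_lintegral_meas_lt_mul μ (.of_forall fun x => norm_nonneg _)
    hf.norm.aemeasurable hp]
  refine ENNReal.mul_lt_top ENNReal.ofReal_lt_top ?_
  have hrpow : IntegrableOn (fun t : ℝ => K * t ^ (p - 1 - s)) (Ioo 0 M) :=
    ((intervalIntegral.intervalIntegrable_rpow' (a := 0) (b := M) (by linarith)).1.mono_set
      Ioo_subset_Ioc_self).const_mul K
  have hpointwise : ∀ t ∈ Ioi (0 : ℝ), μ {x | t < ‖f x‖} * ENNReal.ofReal (t ^ (p - 1)) ≤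
      (Ioo 0 M).indicator (fun t => ENNReal.ofReal (K * t ^ (p - 1 - s))) t := fun t ht => by
    by_cases htM : t < M
    · have htM' : t ∈ Ioo 0 M := ⟨ht, htM⟩
      rw [indicator_of_mem htM', sub_eq_neg_add (p - 1) s, Real.rpow_add ht,
        ← mul_assoc, ENNReal.ofReal_mul' (Real.rpow_nonneg (le_of_lt ht) _)]
      gcongr
      exact hK t ⟨ht, htM⟩
    · have hempty : {x | t < ‖f x‖} = ∅ :=
        eq_empty_of_forall_notMem fun x hx => htM (hx.trans_le (hM x))
      simp [hempty]
  calc ∫⁻ t in Ioi 0, μ {x | t < ‖f x‖} * ENNReal.ofReal (t ^ (p - 1))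
      ≤ ∫⁻ t in Ioi 0, (Ioo 0 M).indicator (fun t => ENNReal.ofReal (K * t ^ (p - 1 - s))) t :=
        setLIntegral_mono' measurableSet_Ioi hpointwise
    _ ≤ ∫⁻ t in Ioo 0 M, ENNReal.ofReal (K * t ^ (p - 1 - s)) := by
        rw [← lintegral_indicator measurableSet_Ioo]
        exact setLIntegral_le_lintegral _ _
    _ < ∞ := hrpow.setLIntegral_lt_top

theorem lintegral_mul_rpow_le_lintegral_rpow_mul_lintegral_mul_rpow {Y : Type*} [MeasurableSpace Y]
    {ν : Measure Y} {c h : Y → ℝ≥0∞} (hc : AEMeasurable c ν) (hh : AEMeasurable h ν) {p : ℝ}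
    (hp : 1 ≤ p) :
    (∫⁻ y, c y * h y ∂ν) ^ p ≤ (∫⁻ y, c y ∂ν) ^ (p - 1) * ∫⁻ y, c y * h y ^ p ∂ν := by
  have hp0 : 0 < p := zero_lt_one.trans_le hp
  have hinv : 0 ≤ 1 - p⁻¹ := sub_nonneg.2 (inv_le_one_of_one_le₀ hp)
  have hfactor : ∀ y, c y * h y = (c y * h y ^ p) ^ p⁻¹ * c y ^ (1 - p⁻¹) := fun y => by
    rw [ENNReal.mul_rpow_of_nonneg _ _ (by positivity), ENNReal.rpow_rpow_inv hp0.ne',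
      mul_right_comm, ← ENNReal.rpow_add_of_nonneg _ _ (by positivity) hinv, add_sub_cancel,
      ENNReal.rpow_one]
  calc (∫⁻ y, c y * h y ∂ν) ^ p
      ≤ ((∫⁻ y, c y * h y ^ p ∂ν) ^ p⁻¹ * (∫⁻ y, c y ∂ν) ^ (1 - p⁻¹)) ^ p := by
        simp_rw [hfactor]
        gcongr
        exact ENNReal.lintegral_mul_norm_pow_le (hc.mul (hh.pow_const p)) hc (by positivity) hinv
          (add_sub_cancel _ _)
    _ = (∫⁻ y, c y ∂ν) ^ (p - 1) * ∫⁻ y, c y * h y ^ p ∂ν := by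
        rw [ENNReal.mul_rpow_of_nonneg _ _ hp0.le, ENNReal.rpow_inv_rpow hp0.ne',
          ← ENNReal.rpow_mul, sub_mul, one_mul, inv_mul_cancel₀ hp0.ne', mul_comm]

theorem ae_ae_mul_div_cancel {X Y : Type*} [MeasurableSpace X] [MeasurableSpace Y]
    {μ : Measure X} {ν : Measure Y} [SFinite μ] [SFinite ν] {F : X → Y → ℝ≥0∞} {c : Y → ℝ≥0∞}
    (hF : Measurable (Function.uncurry F)) (hc : Measurable c) (hfin : ∀ᵐ y ∂ν, c y < ∞)
    (hzero : ∀ y, c y = 0 → ∀ᵐ x ∂μ, F x y = 0) :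
    ∀ᵐ x ∂μ, ∀ᵐ y ∂ν, c y * (F x y / c y) = F x y := by
  have hmeas : MeasurableSet {z : X × Y | c z.2 * (F z.1 z.2 / c z.2) = F z.1 z.2} :=
    measurableSet_eq_fun ((hc.comp measurable_snd).mul (hF.div (hc.comp measurable_snd))) hF
  refine (Measure.ae_ae_comm hmeas).2 ?_
  filter_upwards [hfin] with y hy
  rcases eq_or_ne (c y) 0 with hcy | hcy
  · filter_upwards [hzero y hcy] with x hx
    rw [hx, ENNReal.zero_div, mul_zero]
  · exact .of_forall fun x => ENNReal.mul_div_cancel hcy hy.ne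

theorem lintegral_const_mul_div_rpow_le {X : Type*} [MeasurableSpace X] {μ : Measure X}
    {f : X → ℝ≥0∞} (hf : Measurable f) {c : ℝ≥0∞} {p : ℝ} (hp : 0 ≤ p)
    (hc : ∫⁻ x, f x ^ p ∂μ = c ^ p) : ∫⁻ x, c * (f x / c) ^ p ∂μ ≤ c := by
  simp_rw [ENNReal.div_rpow_of_nonneg _ _ hp, div_eq_mul_inv]
  rw [lintegral_const_mul _ ((hf.pow_const p).mul_const _),
    lintegral_mul_const _ (hf.pow_const p), hc, ← div_eq_mul_inv]
  exact mul_le_of_le_one_right' ENNReal.div_self_le_one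

theorem lintegral_rpow_lintegral_le_rpow_lintegral {X Y : Type*} [MeasurableSpace X]
    [MeasurableSpace Y] {μ : Measure X} {ν : Measure Y} [SFinite μ] [SFinite ν]
    {F : X → Y → ℝ≥0∞} (hF : Measurable (Function.uncurry F)) {p : ℝ} (hp : 1 ≤ p) :
    ∫⁻ x, (∫⁻ y, F x y ∂ν) ^ p ∂μ ≤ (∫⁻ y, (∫⁻ x, F x y ^ p ∂μ) ^ p⁻¹ ∂ν) ^ p := by
  have hp0 : 0 < p := zero_lt_one.trans_le hp
  set c : Y → ℝ≥0∞ := fun y => (∫⁻ x, F x y ^ p ∂μ) ^ p⁻¹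
  have hc : Measurable c := ((hF.pow_const p).lintegral_prod_left').pow_const _
  have hdiv : Measurable fun z : X × Y => F z.1 z.2 / c z.2 := hF.div (hc.comp measurable_snd)
  have hcdiv : Measurable fun z : X × Y => c z.2 * (F z.1 z.2 / c z.2) ^ p :=
    (hc.comp measurable_snd).mul (hdiv.pow_const p)
  rcases eq_or_ne (∫⁻ y, c y ∂ν) ∞ with htop | htop
  · simp [htop, hp0]
  have hzero (y : Y) (hcy : c y = 0) : ∀ᵐ x ∂μ, F x y = 0 := by
    have hFy : Measurable fun x => F x y ^ p := (hF.comp measurable_prodMk_right).pow_const p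
    rw [ENNReal.rpow_eq_zero_iff_of_pos (by positivity), lintegral_eq_zero_iff hFy] at hcy
    filter_upwards [hcy] with x hx using (ENNReal.rpow_eq_zero_iff_of_pos hp0).1 hx
  calc ∫⁻ x, (∫⁻ y, F x y ∂ν) ^ p ∂μ
      ≤ ∫⁻ x, (∫⁻ y, c y ∂ν) ^ (p - 1) * ∫⁻ y, c y * (F x y / c y) ^ p ∂ν ∂μ := by
        -- Hölder with weight `c`: the slices `F · y / c y` are normalized in `L^p`.
        refine lintegral_mono_ae ?_
        filter_upwards [ae_ae_mul_div_cancel hF hc (ae_lt_top hc htop) hzero] with x hx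
        rw [← lintegral_congr_ae hx]
        exact lintegral_mul_rpow_le_lintegral_rpow_mul_lintegral_mul_rpow hc.aemeasurable
          (hdiv.comp measurable_prodMk_left).aemeasurable hp
    _ = (∫⁻ y, c y ∂ν) ^ (p - 1) * ∫⁻ y, ∫⁻ x, c y * (F x y / c y) ^ p ∂μ ∂ν := by
        rw [lintegral_const_mul _ hcdiv.lintegral_prod_right',
          lintegral_lintegral_swap hcdiv.aemeasurable]
    _ ≤ (∫⁻ y, c y ∂ν) ^ (p - 1) * ∫⁻ y, c y ∂ν := by
        gcongr with y
        exact lintegral_const_mul_div_rpow_le (hF.comp measurable_prodMk_right) hp0.le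
          (ENNReal.rpow_inv_rpow hp0.ne' _).symm
    _ = (∫⁻ y, c y ∂ν) ^ p := by
        nth_rw 2 [← ENNReal.rpow_one (∫⁻ y, c y ∂ν)]
        rw [← ENNReal.rpow_add_of_nonneg _ _ (sub_nonneg.2 hp) zero_le_one, sub_add_cancel]

theorem memLp_integral_of_lintegral_eLpNorm_ne_top {X Y E : Type*} [MeasurableSpace X]
    [MeasurableSpace Y] [NormedAddCommGroup E] [NormedSpace ℝ E] {μ : Measure X} {ν : Measure Y}
    [SFinite μ] [SFinite ν] {F : X → Y → E} (hF : StronglyMeasurable (Function.uncurry F)) {p : ℝ}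
    (hp : 1 ≤ p) (hfin : ∫⁻ y, eLpNorm (fun x => F x y) (ENNReal.ofReal p) μ ∂ν ≠ ∞) :
    MemLp (fun x => ∫ y, F x y ∂ν) (ENNReal.ofReal p) μ := by
  have hp0 : 0 < p := zero_lt_one.trans_le hp
  have hpne : ENNReal.ofReal p ≠ 0 := by simpa using hp0
  simp_rw [eLpNorm_eq_lintegral_rpow_enorm_toReal hpne ENNReal.ofReal_ne_top,
    ENNReal.toReal_ofReal hp0.le, one_div] at hfin
  refine ⟨hF.integral_prod_right.aestronglyMeasurable,
    (eLpNorm_lt_top_iff_lintegral_rpow_enorm_lt_top hpne ENNReal.ofReal_ne_top).2 ?_⟩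
  rw [ENNReal.toReal_ofReal hp0.le]
  calc ∫⁻ x, ‖∫ y, F x y ∂ν‖ₑ ^ p ∂μ ≤ ∫⁻ x, (∫⁻ y, ‖F x y‖ₑ ∂ν) ^ p ∂μ := by
        gcongr
        exact enorm_integral_le_lintegral_enorm _
    _ ≤ (∫⁻ y, (∫⁻ x, ‖F x y‖ₑ ^ p ∂μ) ^ p⁻¹ ∂ν) ^ p :=
        lintegral_rpow_lintegral_le_rpow_lintegral hF.enorm hp
    _ < ∞ := ENNReal.rpow_lt_top_of_nonneg hp0.le hfin

section Dilation

variable {ι : Type*} (d : ι → ℕ)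

/-- The anisotropic dilation `α j ↦ α j * c ^ d j` of the coefficients of a phase, dual to the
dilation `x ↦ c * x` of its variable. -/
def dilation (c : ℝ) (α : ι → ℝ) : ι → ℝ := fun j => α j * c ^ d j

theorem continuous_uncurry_dilation : Continuous (Function.uncurry (dilation d)) :=
  continuous_pi fun j => by
    simp only [Function.uncurry_def, dilation]
    fun_prop

variable [Fintype ι]

theorem eval_phase_dilation (c : ℝ) (α : ι → ℝ) (x : ℝ) :
    (phase d (dilation d c α)).eval x = (phase d α).eval (c * x) := by
  simp only [eval_phase, dilation, mul_pow, mul_assoc]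

variable {d}

theorem map_dilation_volume {c : ℝ} (hc : c ≠ 0) :
    Measure.map (dilation d c) volume =
      ENNReal.ofReal |(c ^ ∑ j, d j)⁻¹| • (volume : Measure (ι → ℝ)) := by
  classical
  have hlinear : dilation d c = Matrix.toLin' (Matrix.diagonal fun j => c ^ d j) := by
    ext α j
    rw [Matrix.toLin'_apply, Matrix.mulVec_diagonal, mul_comm, dilation]
  have hdet : LinearMap.det (Matrix.toLin' (Matrix.diagonal fun j => c ^ d j)) =
      c ^ ∑ j, d j := by
    rw [LinearMap.det_toLin', Matrix.det_diagonal, Finset.prod_pow_eq_pow_sum]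
  rw [hlinear, Measure.map_linearMap_addHaar_eq_smul_addHaar _ (by rw [hdet]; positivity), hdet]

variable {E : Type*} [NormedAddCommGroup E] {f : (ι → ℝ) → E}

theorem eLpNorm_comp_dilation (hf : AEStronglyMeasurable f) {c p : ℝ} (hc : 0 < c) (hp : 0 < p) :
    eLpNorm (fun α => f (dilation d c α)) (ENNReal.ofReal p) volume =
      ENNReal.ofReal (c ^ (-(∑ j, d j : ℕ) / p : ℝ)) * eLpNorm f (ENNReal.ofReal p) volume := by
  have hmeas : Measurable (dilation d c) :=
    ((continuous_uncurry_dilation d).comp (.prodMk_right c)).measurable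
  have hf_map : AEStronglyMeasurable f (Measure.map (dilation d c) volume) := by
    rw [map_dilation_volume hc.ne']
    exact hf.smul_measure _
  rw [← Function.comp_def, ← eLpNorm_map_measure hf_map hmeas.aemeasurable,
    map_dilation_volume hc.ne', eLpNorm_smul_measure_of_ne_top ENNReal.ofReal_ne_top, smul_eq_mul,
    ENNReal.toReal_div, ENNReal.toReal_ofReal hp.le,
    ENNReal.ofReal_rpow_of_nonneg (by positivity) (by positivity), abs_of_pos (by positivity),
    ← Real.rpow_natCast, ← Real.rpow_neg hc.le, ← Real.rpow_mul hc.le]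
  simp [div_eq_mul_inv]

theorem memLp_integral_dilation [NormedSpace ℝ E] (hf : StronglyMeasurable f) {p : ℝ} (hp : 1 ≤ p)
    (hdp : (∑ j, d j : ℕ) < p) (hfp : MemLp f (ENNReal.ofReal p) volume) :
    MemLp (fun α => ∫ t in Ioc (0 : ℝ) 1, f (dilation d t α)) (ENNReal.ofReal p) volume := by
  have hp0 : 0 < p := zero_lt_one.trans_le hp
  have hswap : Continuous fun z : (ι → ℝ) × ℝ => dilation d z.2 z.1 :=
    (continuous_uncurry_dilation d).comp continuous_swap
  refine memLp_integral_of_lintegral_eLpNorm_ne_top (F := fun α t => f (dilation d t α))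
    (hf.comp_measurable hswap.measurable) hp (ne_of_lt ?_)
  have hexponent : -1 < (-(∑ j, d j : ℕ) / p : ℝ) := by
    rw [lt_div_iff₀ hp0]
    linarith
  calc ∫⁻ t in Ioc (0 : ℝ) 1, eLpNorm (fun α => f (dilation d t α)) (ENNReal.ofReal p) volume
      = (∫⁻ t in Ioc (0 : ℝ) 1, ENNReal.ofReal (t ^ (-(∑ j, d j : ℕ) / p : ℝ))) *
          eLpNorm f (ENNReal.ofReal p) volume := by
        rw [← lintegral_mul_const' _ _ hfp.eLpNorm_ne_top]
        exact setLIntegral_congr_fun measurableSet_Ioc fun t ht =>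
          eLpNorm_comp_dilation hf.aestronglyMeasurable ht.1 hp0
    _ < ∞ := ENNReal.mul_lt_top
        (intervalIntegral.intervalIntegrable_rpow' hexponent).1.setLIntegral_lt_top
        hfp.eLpNorm_lt_top

end Dilation

theorem setIntegral_Icc_fin_succ {E : Type*} [NormedAddCommGroup E] [NormedSpace ℝ E] {n : ℕ}
    {a b : Fin (n + 1) → ℝ} {g : (Fin (n + 1) → ℝ) → E} (hg : IntegrableOn g (Icc a b)) :
    ∫ x in Icc a b, g x =
      ∫ t in Icc (a 0) (b 0), ∫ y in Icc (Fin.tail a) (Fin.tail b), g (Fin.cons t y) := by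
  have he := (volume_preserving_piFinSuccAbove (fun _ : Fin (n + 1) => ℝ) 0).symm
  set e := (MeasurableEquiv.piFinSuccAbove (fun _ : Fin (n + 1) => ℝ) 0).symm
  have he_apply (z : ℝ × (Fin n → ℝ)) : e z = Fin.cons z.1 z.2 := by
    simp [e, MeasurableEquiv.piFinSuccAbove, Fin.insertNthEquiv]
  have hpreimage : e ⁻¹' Icc a b = Icc (a 0) (b 0) ×ˢ Icc (Fin.tail a) (Fin.tail b) := by
    ext z
    rw [mem_preimage, he_apply, mem_Icc, Fin.le_cons, Fin.cons_le, and_and_and_comm, mem_prod,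
      mem_Icc, mem_Icc]
  have hg_prod : IntegrableOn (fun z => g (e z)) (e ⁻¹' Icc a b) :=
    (he.integrableOn_comp_preimage e.measurableEmbedding).2 hg
  rw [hpreimage, Measure.volume_eq_prod] at hg_prod
  rw [← he.setIntegral_preimage_emb e.measurableEmbedding, hpreimage, Measure.volume_eq_prod,
    setIntegral_prod _ hg_prod]
  simp_rw [he_apply]

section OscIntegral

variable {ι : Type*} [Fintype ι] (d : ι → ℕ)

/-- The oscillatory integral `∫ exp (2πi ∑ j, α j * (x 1 ⋯ x r) ^ d j) dx` over the unit cube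
`[0, 1]^r`. -/
noncomputable def oscIntegral (r : ℕ) (α : ι → ℝ) : ℂ :=
  ∫ x in Icc (0 : Fin r → ℝ) 1, (𝐞 ((phase d α).eval (∏ i, x i)) : ℂ)

theorem stronglyMeasurable_oscIntegral (r : ℕ) : StronglyMeasurable (oscIntegral d r) := by
  have hcont : Continuous fun z : (ι → ℝ) × (Fin r → ℝ) =>
      (𝐞 ((phase d z.1).eval (∏ i, z.2 i)) : ℂ) := by
    simp only [eval_phase]
    fun_prop
  exact hcont.stronglyMeasurable.integral_prod_right

theorem norm_oscIntegral_le_one (r : ℕ) (α : ι → ℝ) : ‖oscIntegral d r α‖ ≤ 1 := by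
  refine (norm_setIntegral_le_of_norm_le_const (C := 1) ?_ fun x _ =>
    (Circle.norm_coe _).le).trans ?_
  · exact isCompact_Icc.measure_lt_top
  · simp [Measure.real, Real.volume_Icc_pi]

theorem oscIntegral_succ (r : ℕ) (α : ι → ℝ) :
    oscIntegral d (r + 1) α = ∫ t in Ioc (0 : ℝ) 1, oscIntegral d r (dilation d t α) := by
  have hcont : Continuous fun x : Fin (r + 1) → ℝ => (𝐞 ((phase d α).eval (∏ i, x i)) : ℂ) := by
    fun_prop
  rw [oscIntegral, setIntegral_Icc_fin_succ (hcont.continuousOn.integrableOn_compact isCompact_Icc),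
    integral_Icc_eq_integral_Ioc]
  simp only [Fin.prod_cons, oscIntegral, eval_phase_dilation]
  rfl

theorem oscIntegral_one (α : ι → ℝ) :
    oscIntegral d 1 α = ∫ x in (0 : ℝ)..1, (𝐞 ((phase d α).eval x) : ℂ) := by
  rw [oscIntegral_succ, intervalIntegral.integral_of_le zero_le_one]
  simp [oscIntegral, eval_phase_dilation, Measure.real, Real.volume_Icc_pi]

variable {d}

theorem memLp_oscIntegral_of_memLp_one {p : ℝ} (hp : 1 ≤ p) (hdp : (∑ j, d j : ℕ) < p)
    (hone : MemLp (oscIntegral d 1) (ENNReal.ofReal p) volume) {r : ℕ} (hr : 1 ≤ r) :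
    MemLp (oscIntegral d r) (ENNReal.ofReal p) volume := by
  induction r, hr using Nat.le_induction with
  | base => exact hone
  | succ r _ ih =>
    rw [funext (oscIntegral_succ d r)]
    exact memLp_integral_dilation (stronglyMeasurable_oscIntegral d r) hp hdp ih

end OscIntegral

theorem exists_abs_derivative_le_of_lt_norm_oscIntegral {m N : ℕ} (hN : 0 < N) {α : Fin m → ℝ}
    (hα : (3 * m + 1) * (2 / N : ℝ) < ‖oscIntegral (tarryExponent m) 1 α‖) :
    ∃ i < N, ∀ x ∈ Icc (i / N : ℝ) (i / N + 1 / N),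
      |(derivative (phase (tarryExponent m) α)).eval x| ≤ N := by
  have hN' : (0 : ℝ) < N := by exact_mod_cast hN
  by_contra! hcon
  refine hα.not_ge ?_
  rw [oscIntegral_one]
  have hdegree : ((phase (tarryExponent m) α).natDegree : ℝ) ≤ m := by
    exact_mod_cast natDegree_phase_tarryExponent_le α
  refine (norm_integral_fourierChar_eval_le hN' (B := 2 / N) (by gcongr; norm_num) zero_le_one
    fun c d hc _ hd hsmall => ?_).trans (by gcongr)
  by_contra! hlong
  obtain ⟨i, hi, hsub⟩ := exists_Icc_div_subset_Icc hN hc hd hlong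
  obtain ⟨x, hx, hlarge⟩ := hcon i hi
  exact hlarge.not_ge (hsmall x (hsub hx))

theorem exists_volume_lt_norm_oscIntegral_le_pow (m : ℕ) :
    ∃ K : ℝ, 0 ≤ K ∧ ∀ N : ℕ, 0 < N →
      volume {α | (3 * m + 1) * (2 / N : ℝ) < ‖oscIntegral (tarryExponent m) 1 α‖} ≤
        ENNReal.ofReal (K * N ^ ((∑ j, tarryExponent m j) + 1)) := by
  obtain ⟨K, hK0, hK⟩ := exists_volume_abs_derivative_phase_le m
  refine ⟨K, hK0, fun N hN => ?_⟩
  have hN' : (0 : ℝ) < N := by exact_mod_cast hN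
  calc volume {α | (3 * m + 1) * (2 / N : ℝ) < ‖oscIntegral (tarryExponent m) 1 α‖}
      ≤ volume (⋃ i ∈ Finset.range N, {α : Fin m → ℝ | ∀ x ∈ Icc (i / N : ℝ) (i / N + 1 / N),
          |(derivative (phase (tarryExponent m) α)).eval x| ≤ N}) :=
        measure_mono fun α hα => by
          simpa using exists_abs_derivative_le_of_lt_norm_oscIntegral hN hα
    _ ≤ ∑ i ∈ Finset.range N, ENNReal.ofReal (K * (N ^ m / (1 / N) ^ ∑ j : Fin m, (j : ℕ))) :=
        (measure_biUnion_finset_le _ _).trans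
          (Finset.sum_le_sum fun i _ => hK _ _ _ (by positivity) hN'.le)
    _ = ENNReal.ofReal (K * N ^ ((∑ j, tarryExponent m j) + 1)) := by
        rw [Finset.sum_const, Finset.card_range, ← ENNReal.ofReal_nsmul, nsmul_eq_mul,
          Finset.sum_add_distrib]
        simp only [Finset.sum_const, Finset.card_univ, Fintype.card_fin, smul_eq_mul, mul_one,
          pow_add, pow_one, one_div, inv_pow, div_inv_eq_mul]
        congr 1
        ring

theorem exists_volume_lt_norm_oscIntegral_le_rpow (m : ℕ) :
    ∃ K : ℝ, ∀ t ∈ Ioo (0 : ℝ) 1,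
      volume {α | t < ‖oscIntegral (tarryExponent m) 1 α‖} ≤
        ENNReal.ofReal (K * t ^ (-((∑ j, tarryExponent m j : ℕ) + 1) : ℝ)) := by
  obtain ⟨K, hK0, hK⟩ := exists_volume_lt_norm_oscIntegral_le_pow m
  set D := ∑ j, tarryExponent m j
  set c : ℝ := (3 * m + 1) * 2 with hc
  refine ⟨K * (c + 1) ^ (D + 1), fun t ht => ?_⟩
  have hc0 : 0 < c := by positivity
  set N := ⌈c / t⌉₊
  have hN : 0 < N := Nat.ceil_pos.2 (div_pos hc0 ht.1)
  have hN' : (0 : ℝ) < N := by exact_mod_cast hN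
  have hN_upper : (N : ℝ) ≤ (c + 1) / t := by
    have hone : 1 ≤ 1 / t := (one_le_div ht.1).2 ht.2.le
    rw [add_div]
    linarith [Nat.ceil_lt_add_one (div_pos hc0 ht.1).le]
  have hlevel : (3 * m + 1) * (2 / N : ℝ) ≤ t := by
    rw [← mul_div_assoc, ← hc, div_le_iff₀ hN', ← div_le_iff₀' ht.1]
    exact Nat.le_ceil _
  calc volume {α | t < ‖oscIntegral (tarryExponent m) 1 α‖}
      ≤ ENNReal.ofReal (K * N ^ (D + 1)) :=
        (measure_mono fun α hα => hlevel.trans_lt hα).trans (hK N hN)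
    _ ≤ ENNReal.ofReal (K * ((c + 1) / t) ^ (D + 1)) := by gcongr
    _ = ENNReal.ofReal (K * (c + 1) ^ (D + 1) * t ^ (-(D + 1) : ℝ)) := by
        rw [Real.rpow_neg ht.1.le, ← Nat.cast_add_one, Real.rpow_natCast, div_pow, mul_assoc,
          div_eq_mul_inv]

theorem memLp_oscIntegral_one {m : ℕ} {p : ℝ}
    (hp : (∑ j, tarryExponent m j : ℕ) + 1 < p) :
    MemLp (oscIntegral (tarryExponent m) 1) (ENNReal.ofReal p) volume := by
  obtain ⟨K, hK⟩ := exists_volume_lt_norm_oscIntegral_le_rpow m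
  exact memLp_of_meas_lt_norm_le (stronglyMeasurable_oscIntegral _ 1).aestronglyMeasurable
    ((Nat.cast_add_one_pos _).trans hp) hp
    (norm_oscIntegral_le_one _ 1) hK

theorem sum_tarryExponent (m : ℕ) : ((∑ j, tarryExponent m j : ℕ) : ℝ) = m * (m + 1) / 2 := by
  rw [Fin.sum_univ_eq_sum_range (fun j => j + 1)]
  induction m with
  | zero => simp
  | succ m ih =>
    rw [Finset.sum_range_succ, Nat.cast_add, ih]
    push_cast
    ring

theorem oscIntegral_eq_integral_exp {m : ℕ} (r : ℕ) (α : Fin m → ℝ) :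
    oscIntegral (tarryExponent m) r α =
      ∫ x in Icc (0 : Fin r → ℝ) 1, Complex.exp (2 * Real.pi * Complex.I *
        ((∑ j : Fin m, α j * (∏ i : Fin r, x i) ^ ((j : ℕ) + 1) : ℝ) : ℂ)) := by
  simp only [oscIntegral, Real.fourierChar_apply, eval_phase]
  congr! 3
  push_cast
  ring

theorem tarry_product_polynomial_converges_general (r m : ℕ) (hr : 1 ≤ r) {p : ℝ}
    (hp : m * (m + 1) / 2 + 1 < p) :
    Integrable
      (fun α : Fin m → ℝ =>
        ‖∫ x in Set.Icc (0 : Fin r → ℝ) 1,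
            Complex.exp (2 * Real.pi * Complex.I *
              ((∑ j : Fin m, α j * (∏ i : Fin r, x i) ^ ((j : ℕ) + 1) : ℝ) : ℂ))‖ ^ p)
      (volume : Measure (Fin m → ℝ)) := by
  simp_rw [← oscIntegral_eq_integral_exp]
  rw [← sum_tarryExponent] at hp
  have hp1 : 1 < p := (le_add_of_nonneg_left (Nat.cast_nonneg _)).trans_lt hp
  have hp0 : 0 < p := zero_lt_one.trans hp1
  have hmemLp := memLp_oscIntegral_of_memLp_one hp1.le ((lt_add_one _).trans hp)
    (memLp_oscIntegral_one hp) hr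
  have hintegrable := hmemLp.integrable_norm_rpow (ENNReal.ofReal_pos.2 hp0).ne'
    ENNReal.ofReal_ne_top
  rwa [ENNReal.toReal_ofReal hp0.le] at hintegrable

theorem tarry_product_polynomial_converges (r m : ℕ) (hr : 1 ≤ r) (hm : 1 ≤ m)
    (k : ℕ) (hk : 0 < k)
    (hineq : (2 * k : ℝ) > m * (m + 1) / 2 + 1) :
    Integrable
      (fun α : Fin m → ℝ =>
        ‖∫ x in Set.Icc (0 : Fin r → ℝ) 1,
            Complex.exp (2 * Real.pi * Complex.I *
              ((∑ j : Fin m, α j * (∏ i : Fin r, x i) ^ ((j : ℕ) + 1) : ℝ) : ℂ))‖ ^ (2 * k))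
      (volume : Measure (Fin m → ℝ)) := by
  exact_mod_cast tarry_product_polynomial_converges_general r m hr hineq
end
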